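/- arXiv:1006.4167 — 2 statements merged into one kernel-verified Lean document; each statement's English description precedes it below -/
import Mathlib

section
/- Let H₁, H₂, H₃ be complex Hilbert spaces and let T₁ : H₁ → H₂ and T₂ : H₂ → H₃ be densely defined, closed linear operators with range(T₁) ⊆ ker(T₂). If there exists a constant c > 0 such that ‖T₁*u‖² + ‖T₂u‖² ≥ c‖u‖² for all u ∈ dom(T₁*) ∩ dom(T₂), then range(T₁) = ker(T₂) and range(T₂) is closed in H₃. -/
open scoped LinearPMap InnerProductSpace

theorem aux_exists_inner {V H : Type*} [AddCommGroup V] [Module ℂ V]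
    [NormedAddCommGroup H] [InnerProductSpace ℂ H] [CompleteSpace H]
    (A : V →ₗ[ℂ] H) (φ : V →ₗ[ℂ] ℂ) (C : ℝ) (h : ∀ u, ‖φ u‖ ≤ C * ‖A u‖) :
    ∃ v : H, ∀ u, inner ℂ v (A u) = φ u := by
  obtain ⟨g, hg⟩ := LinearMap.exists_rightInverse_of_surjective A.rangeRestrict
    A.range_rangeRestrict
  have hg' : ∀ y : LinearMap.range A, A (g y) = y := fun y =>
    congrArg Subtype.val (LinearMap.congr_fun hg y)
  let ψ : StrongDual ℂ (LinearMap.range A) := (φ ∘ₗ g).mkContinuous C (fun y => by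
    have := h (g y)
    rw [hg'] at this
    exact this)
  obtain ⟨G, hG, -⟩ := exists_extension_norm_eq (LinearMap.range A) ψ
  refine ⟨(InnerProductSpace.toDual ℂ H).symm G, fun u => ?_⟩
  rw [InnerProductSpace.toDual_symm_apply]
  have h1 := hG ⟨A u, LinearMap.mem_range_self A u⟩
  have h2 : ψ ⟨A u, LinearMap.mem_range_self A u⟩
    = φ (g ⟨A u, LinearMap.mem_range_self A u⟩) := rfl
  rw [h2] at h1
  refine h1.trans ?_
  have h3 := h (g ⟨A u, LinearMap.mem_range_self A u⟩ - u)
  rw [map_sub A, hg', sub_self, norm_zero, mul_zero, map_sub] at h3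
  exact sub_eq_zero.1 (norm_le_zero_iff.1 h3)

theorem aux_adjoint {H₁ H₂ : Type*}
    [NormedAddCommGroup H₁] [InnerProductSpace ℂ H₁] [CompleteSpace H₁]
    [NormedAddCommGroup H₂] [InnerProductSpace ℂ H₂]
    (T : H₁ →ₗ.[ℂ] H₂) (hd : Dense (T.domain : Set H₁)) (y : H₂) (w : H₁)
    (h : ∀ x : T.domain, inner ℂ w (x : H₁) = inner ℂ y (T x)) :
    ∃ hy : y ∈ T.adjoint.domain, T.adjoint ⟨y, hy⟩ = w :=
  ⟨LinearPMap.mem_adjoint_domain_of_exists y ⟨w, h⟩, LinearPMap.adjoint_apply_eq hd _ h⟩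

theorem aux_double_adjoint {H₁ H₂ : Type*}
    [NormedAddCommGroup H₁] [InnerProductSpace ℂ H₁] [CompleteSpace H₁]
    [NormedAddCommGroup H₂] [InnerProductSpace ℂ H₂] [CompleteSpace H₂]
    (T : H₁ →ₗ.[ℂ] H₂) (hd : Dense (T.domain : Set H₁)) (hc : T.IsClosed)
    (v : H₁) (f : H₂)
    (h : ∀ u : T.adjoint.domain, inner ℂ v (T.adjoint u) = inner ℂ f (u : H₂)) :
    (v, f) ∈ T.graph := by
  let G : Submodule ℂ (WithLp 2 (H₁ × H₂)) :=
    T.graph.comap (WithLp.linearEquiv 2 ℂ (H₁ × H₂)).toLinearMap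
  have hG : IsClosed (G : Set (WithLp 2 (H₁ × H₂))) :=
    IsClosed.preimage (WithLp.prod_continuous_ofLp 2 H₁ H₂) hc
  have : CompleteSpace G := hG.completeSpace_coe
  have key : WithLp.toLp 2 (v, f) ∈ Gᗮᗮ := by
    rw [Submodule.mem_orthogonal']
    intro z hz
    rw [Submodule.mem_orthogonal'] at hz
    obtain ⟨hy, hyw⟩ := aux_adjoint T hd z.snd (-z.fst) (fun x => by
      have := hz (WithLp.toLp 2 ((x : H₁), T x)) (LinearPMap.mem_graph T x)
      rw [WithLp.prod_inner_apply] at this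
      simp only [WithLp.ofLp_fst, WithLp.ofLp_snd] at this
      rw [inner_neg_left]
      exact neg_eq_of_add_eq_zero_right this)
    have h1 := h ⟨z.snd, hy⟩
    rw [hyw, inner_neg_right] at h1
    rw [WithLp.prod_inner_apply]
    simp only [WithLp.ofLp_fst, WithLp.ofLp_snd]
    rw [← h1]
    simp
  rw [Submodule.orthogonal_orthogonal] at key
  exact key

/-- If there is `c > 0` with `‖T₁*u‖² + ‖T₂u‖² ≥ c‖u‖²` for all
`u ∈ dom T₁* ∩ dom T₂`, then `range T₁ = ker T₂` and `range T₂` is closed in `H₃`. -/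
theorem range_eq_ker_and_closed_range_of_coercive
    {H₁ H₂ H₃ : Type*}
    [NormedAddCommGroup H₁] [InnerProductSpace ℂ H₁] [CompleteSpace H₁]
    [NormedAddCommGroup H₂] [InnerProductSpace ℂ H₂] [CompleteSpace H₂]
    [NormedAddCommGroup H₃] [InnerProductSpace ℂ H₃] [CompleteSpace H₃]
    (T₁ : H₁ →ₗ.[ℂ] H₂) (T₂ : H₂ →ₗ.[ℂ] H₃)
    (hd₁ : Dense (T₁.domain : Set H₁)) (hd₂ : Dense (T₂.domain : Set H₂))
    (hc₁ : T₁.IsClosed) (hc₂ : T₂.IsClosed)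
    (hrange : LinearMap.range T₁.toFun ≤
      (LinearMap.ker T₂.toFun).map T₂.domain.subtype)
    (c : ℝ) (hc : 0 < c)
    (hcoercive : ∀ (u : H₂) (hu₁ : u ∈ T₁.adjoint.domain) (hu₂ : u ∈ T₂.domain),
      c * ‖u‖ ^ 2 ≤ ‖T₁.adjoint ⟨u, hu₁⟩‖ ^ 2 + ‖T₂ ⟨u, hu₂⟩‖ ^ 2) :
    LinearMap.range T₁.toFun = (LinearMap.ker T₂.toFun).map T₂.domain.subtype ∧
    IsClosed (LinearMap.range T₂.toFun : Set H₃) := by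
  set K : Submodule ℂ H₂ := (LinearMap.ker T₂.toFun).map T₂.domain.subtype with hK
  have memK : ∀ x : H₂, x ∈ K ↔ (x, (0 : H₃)) ∈ T₂.graph := by
    intro x
    rw [hK, Submodule.mem_map, LinearPMap.mem_graph_iff]
    constructor
    · rintro ⟨y, hy, rfl⟩
      exact ⟨y, rfl, hy⟩
    · rintro ⟨y, hy, hy'⟩
      exact ⟨y, hy', hy⟩
  have hKc : IsClosed (K : Set H₂) := by
    have : (K : Set H₂) = (fun x : H₂ => (x, (0 : H₃))) ⁻¹' (T₂.graph : Set (H₂ × H₃)) := by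
      ext x
      exact memK x
    rw [this]
    exact IsClosed.preimage (by fun_prop) hc₂
  have : CompleteSpace K := hKc.completeSpace_coe
  have hKdom : ∀ x ∈ K, ∃ hx : x ∈ T₂.domain, T₂ ⟨x, hx⟩ = 0 := by
    rintro x ⟨y, hy, rfl⟩
    exact ⟨y.2, hy⟩
  have hperp : ∀ u ∈ Kᗮ, ∃ hu : u ∈ T₁.adjoint.domain, T₁.adjoint ⟨u, hu⟩ = 0 := by
    intro u hu
    refine aux_adjoint T₁ hd₁ u 0 (fun x => ?_)
    rw [inner_zero_left]
    exact ((Submodule.mem_orthogonal' _ _).1 hu _ (hrange (LinearMap.mem_range_self _ x))).symm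
  have hs : 0 < Real.sqrt c := Real.sqrt_pos.2 hc
  have hbound : ∀ a b : ℝ, 0 ≤ b → c * a ^ 2 ≤ b ^ 2 → a ≤ (Real.sqrt c)⁻¹ * b := by
    intro a b hb hab
    rw [inv_mul_eq_div, le_div_iff₀ hs]
    refine abs_le_of_sq_le_sq' ?_ hb |>.2
    rw [mul_pow, Real.sq_sqrt hc.le]
    linarith
  constructor
  · refine le_antisymm hrange ?_
    intro f hf
    obtain ⟨v, hv⟩ := aux_exists_inner T₁.adjoint.toFun
      ((innerₛₗ ℂ f) ∘ₗ T₁.adjoint.domain.subtype) (‖f‖ * (Real.sqrt c)⁻¹) (by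
        intro u
        change ‖inner ℂ f (u : H₂)‖ ≤ _ * ‖T₁.adjoint u‖
        have hp := Submodule.starProjection_apply_mem K (u : H₂)
        have hq := Submodule.sub_starProjection_mem_orthogonal (K := K) (u : H₂)
        set p := K.starProjection (u : H₂) with hpdef
        obtain ⟨hq1, hq2⟩ := hperp _ hq
        obtain ⟨hp1, hp2⟩ := hKdom _ hp
        have hpu : p = (u : H₂) - ((u : H₂) - p) := by abel
        have hpd : p ∈ T₁.adjoint.domain := by
          rw [hpu]
          exact Submodule.sub_mem _ u.2 hq1
        have hpv : T₁.adjoint ⟨p, hpd⟩ = T₁.adjoint u := by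
          have : (⟨p, hpd⟩ : T₁.adjoint.domain) = u - ⟨(u : H₂) - p, hq1⟩ :=
            Subtype.ext hpu
          rw [this, LinearPMap.map_sub, hq2, sub_zero]
        have hco := hcoercive p hpd hp1
        rw [hpv, hp2, norm_zero] at hco
        have hb := hbound ‖p‖ ‖T₁.adjoint u‖ (norm_nonneg _) (by linarith)
        have hin : inner ℂ f (u : H₂) = inner ℂ f p := by
          have := (Submodule.mem_orthogonal _ _).1 hq f hf
          rw [inner_sub_right] at this
          exact sub_eq_zero.1 this
        rw [hin, mul_assoc]
        exact (norm_inner_le_norm _ _).trans (mul_le_mul_of_nonneg_left hb (norm_nonneg _)))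
    have := aux_double_adjoint T₁ hd₁ hc₁ v f hv
    obtain ⟨x, -, hx⟩ := (LinearPMap.mem_graph_iff _).1 this
    exact ⟨x, hx⟩
  · refine IsSeqClosed.isClosed ?_
    intro y y₀ hy hlim
    have hex : ∀ n, ∃ w : T₂.domain, (w : H₂) ∈ Kᗮ ∧ T₂ w = y n := by
      intro n
      obtain ⟨u, hu⟩ := hy n
      have hp := Submodule.starProjection_apply_mem K (u : H₂)
      have hq := Submodule.sub_starProjection_mem_orthogonal (K := K) (u : H₂)
      obtain ⟨hp1, hp2⟩ := hKdom _ hp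
      refine ⟨u - ⟨_, hp1⟩, hq, ?_⟩
      rw [LinearPMap.map_sub, hp2, sub_zero]
      exact hu
    choose w hwK hwy using hex
    have hdist : ∀ m n, dist (w m : H₂) (w n : H₂) ≤ (Real.sqrt c)⁻¹ * dist (y m) (y n) := by
      intro m n
      rw [dist_eq_norm, dist_eq_norm]
      obtain ⟨h1, h2⟩ := hperp _ (Submodule.sub_mem _ (hwK m) (hwK n))
      have hco := hcoercive _ h1 (Submodule.sub_mem _ (w m).2 (w n).2)
      have h3 : T₂ ⟨(w m : H₂) - w n, Submodule.sub_mem _ (w m).2 (w n).2⟩ = y m - y n := by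
        rw [← hwy m, ← hwy n, ← LinearPMap.map_sub]
        rfl
      rw [h2, h3, norm_zero] at hco
      exact hbound _ _ (norm_nonneg _) (by linarith)
    have hcau : CauchySeq (fun n => (w n : H₂)) := by
      have hyc := hlim.cauchySeq
      rw [Metric.cauchySeq_iff] at hyc ⊢
      intro ε hε
      obtain ⟨N, hN⟩ := hyc (Real.sqrt c * ε) (by positivity)
      refine ⟨N, fun m hm n hn => (hdist m n).trans_lt ?_⟩
      rw [inv_mul_eq_div, div_lt_iff₀ hs, mul_comm ε]
      exact hN m hm n hn
    obtain ⟨w₀, hw₀⟩ := cauchySeq_tendsto_of_complete hcau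
    have hmem : (w₀, y₀) ∈ (T₂.graph : Set (H₂ × H₃)) := by
      refine IsClosed.mem_of_tendsto hc₂ (hw₀.prodMk_nhds hlim) (Filter.Eventually.of_forall ?_)
      intro n
      have := LinearPMap.mem_graph T₂ (w n)
      rw [hwy] at this
      exact this
    obtain ⟨x, -, hx⟩ := (LinearPMap.mem_graph_iff _).1 hmem
    exact ⟨x, hx⟩
end

section
/- Let H₁, H₂, H₃ be complex Hilbert spaces and let T₁ : H₁ → H₂ and T₂ : H₂ → H₃ be densely defined, closed linear operators with range(T₁) ⊆ ker(T₂). Suppose range(T₁) and range(T₂) are closed and set N = ker(T₁*) ∩ ker(T₂). Then there exists a constant c > 0 such that ‖T₁*u‖² + ‖T₂u‖² ≥ c‖u‖² for all u ∈ dom(T₁*) ∩ dom(T₂) with u ⊥ N. -/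
open scoped LinearPMap InnerProductSpace

theorem closed_range_bounded_preimage {E F : Type*}
    [NormedAddCommGroup E] [InnerProductSpace ℂ E] [CompleteSpace E]
    [NormedAddCommGroup F] [InnerProductSpace ℂ F] [CompleteSpace F]
    (T : E →ₗ.[ℂ] F) (hc : T.IsClosed)
    (hr : IsClosed (LinearMap.range T.toFun : Set F)) :
    ∃ C : ℝ, 0 < C ∧ ∀ y ∈ LinearMap.range T.toFun, ∃ x : T.domain,
      T x = y ∧ ‖(x : E)‖ ≤ C * ‖y‖ := by
  have hg : IsClosed (T.graph : Set (E × F)) := hc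
  haveI : CompleteSpace T.graph := hg.completeSpace_coe
  haveI : CompleteSpace (LinearMap.range T.toFun) := hr.completeSpace_coe
  have hmem : ∀ z : T.graph,
      ((ContinuousLinearMap.snd ℂ E F).comp T.graph.subtypeL) z ∈ LinearMap.range T.toFun := by
    rintro ⟨⟨a, b⟩, hz⟩
    obtain ⟨x, hx1, hx2⟩ := (LinearPMap.mem_graph_iff T).1 hz
    exact ⟨x, hx2⟩
  let f : T.graph →L[ℂ] LinearMap.range T.toFun :=
    ((ContinuousLinearMap.snd ℂ E F).comp T.graph.subtypeL).codRestrict _ hmem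
  have hs : Function.Surjective f := by
    rintro ⟨y, x, hx⟩
    refine ⟨⟨((x : E), T x), T.mem_graph x⟩, ?_⟩
    exact Subtype.ext hx
  obtain ⟨C, hC, h⟩ := f.exists_preimage_norm_le hs
  refine ⟨C, hC, fun y hy => ?_⟩
  obtain ⟨⟨⟨a, b⟩, hz⟩, h1, h2⟩ := h ⟨y, hy⟩
  obtain ⟨x, hx1, hx2⟩ := (LinearPMap.mem_graph_iff T).1 hz
  have hb : b = y := congrArg Subtype.val h1
  refine ⟨x, ?_, ?_⟩
  · exact (hx2 : T x = b).trans hb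
  · have : ‖a‖ ≤ ‖((a, b) : E × F)‖ := le_max_left _ _
    have hx1' : (x : E) = a := hx1
    rw [hx1']
    exact this.trans h2

theorem mem_ker_adjoint_of_orth {E F : Type*}
    [NormedAddCommGroup E] [InnerProductSpace ℂ E] [CompleteSpace E]
    [NormedAddCommGroup F] [InnerProductSpace ℂ F] [CompleteSpace F]
    (T : E →ₗ.[ℂ] F) (hd : Dense (T.domain : Set E)) (q : F)
    (hq : q ∈ (LinearMap.range T.toFun)ᗮ) :
    q ∈ (LinearMap.ker T.adjoint.toFun).map T.adjoint.domain.subtype := by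
  have h0 : ∀ x : T.domain, ⟪(0 : E), (x : E)⟫_ℂ = ⟪q, T x⟫_ℂ := fun x => by
    rw [inner_zero_left, (Submodule.mem_orthogonal' _ _).1 hq (T x) ⟨x, rfl⟩]
  have hm : q ∈ T.adjoint.domain := T.mem_adjoint_domain_of_exists q ⟨0, h0⟩
  exact ⟨⟨q, hm⟩, LinearPMap.adjoint_apply_eq hd ⟨q, hm⟩ h0, rfl⟩

theorem le_of_sq_le_mul' {a b : ℝ} (ha : 0 ≤ a) (hb : 0 ≤ b) (h : a ^ 2 ≤ a * b) : a ≤ b := by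
  rcases ha.eq_or_lt with rfl | h0
  · exact hb
  · nlinarith

/-- If `range T₁` and `range T₂` are closed and `N = ker T₁* ∩ ker T₂`,
then there is `c > 0` with `‖T₁*u‖² + ‖T₂u‖² ≥ c‖u‖²` for all `u ∈ dom T₁* ∩ dom T₂`
with `u ⊥ N`. -/
theorem coercive_on_orthogonal_of_closed_ranges
    {H₁ H₂ H₃ : Type*}
    [NormedAddCommGroup H₁] [InnerProductSpace ℂ H₁] [CompleteSpace H₁]
    [NormedAddCommGroup H₂] [InnerProductSpace ℂ H₂] [CompleteSpace H₂]
    [NormedAddCommGroup H₃] [InnerProductSpace ℂ H₃] [CompleteSpace H₃]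
    (T₁ : H₁ →ₗ.[ℂ] H₂) (T₂ : H₂ →ₗ.[ℂ] H₃)
    (hd₁ : Dense (T₁.domain : Set H₁)) (hd₂ : Dense (T₂.domain : Set H₂))
    (hc₁ : T₁.IsClosed) (hc₂ : T₂.IsClosed)
    (hrange : LinearMap.range T₁.toFun ≤
      (LinearMap.ker T₂.toFun).map T₂.domain.subtype)
    (hclosed₁ : IsClosed (LinearMap.range T₁.toFun : Set H₂))
    (hclosed₂ : IsClosed (LinearMap.range T₂.toFun : Set H₃)) :
    ∃ c : ℝ, 0 < c ∧ ∀ (u : H₂) (hu₁ : u ∈ T₁.adjoint.domain) (hu₂ : u ∈ T₂.domain),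
      u ∈ ((LinearMap.ker T₁.adjoint.toFun).map T₁.adjoint.domain.subtype ⊓
          (LinearMap.ker T₂.toFun).map T₂.domain.subtype)ᗮ →
      c * ‖u‖ ^ 2 ≤ ‖T₁.adjoint ⟨u, hu₁⟩‖ ^ 2 + ‖T₂ ⟨u, hu₂⟩‖ ^ 2 := by
  obtain ⟨C, hC, hC'⟩ := closed_range_bounded_preimage T₁ hc₁ hclosed₁
  obtain ⟨D, hD, hD'⟩ := closed_range_bounded_preimage T₂ hc₂ hclosed₂
  haveI : CompleteSpace (LinearMap.range T₁.toFun) := hclosed₁.completeSpace_coe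
  refine ⟨1 / (C ^ 2 + D ^ 2), by positivity, fun u hu₁ hu₂ hu => ?_⟩
  obtain ⟨p, hp, q, hq, hpq⟩ := (LinearMap.range T₁.toFun).exists_add_mem_mem_orthogonal u
  have horth : ⟪q, p⟫_ℂ = 0 := (Submodule.mem_orthogonal' _ _).1 hq p hp
  have hpb : ‖p‖ ≤ C * ‖T₁.adjoint ⟨u, hu₁⟩‖ := by
    obtain ⟨x, hx, hxn⟩ := hC' p hp
    apply le_of_sq_le_mul' (norm_nonneg _) (by positivity)
    have h1 : ⟪u, p⟫_ℂ = ⟪T₁.adjoint ⟨u, hu₁⟩, (x : H₁)⟫_ℂ := by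
      rw [← hx]
      exact (LinearPMap.adjoint_isFormalAdjoint hd₁ ⟨u, hu₁⟩ x).symm
    have h2 : ⟪u, p⟫_ℂ = ((‖p‖ ^ 2 : ℝ) : ℂ) := by
      rw [hpq, inner_add_left, horth, add_zero, inner_self_eq_norm_sq_to_K]; push_cast; rfl
    have h3 : ‖p‖ ^ 2 = ‖⟪T₁.adjoint ⟨u, hu₁⟩, (x : H₁)⟫_ℂ‖ := by
      rw [← h1, h2, Complex.norm_real, Real.norm_of_nonneg (by positivity)]
    rw [h3]
    calc _ ≤ ‖T₁.adjoint ⟨u, hu₁⟩‖ * ‖(x : H₁)‖ := norm_inner_le_norm _ _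
      _ ≤ ‖T₁.adjoint ⟨u, hu₁⟩‖ * (C * ‖p‖) := by gcongr
      _ = _ := by ring
  have hqb : ‖q‖ ≤ D * ‖T₂ ⟨u, hu₂⟩‖ := by
    obtain ⟨w, hw, hwn⟩ := hD' (T₂ ⟨u, hu₂⟩) ⟨_, rfl⟩
    refine le_trans ?_ hwn
    have huw : u - w ∈ (LinearMap.ker T₂.toFun).map T₂.domain.subtype := by
      refine ⟨⟨u, hu₂⟩ - w, ?_, rfl⟩
      change T₂.toFun _ = 0
      rw [map_sub]
      exact sub_eq_zero.2 hw.symm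
    obtain ⟨r, hr, n, hn, hrn⟩ :=
      (LinearMap.range T₁.toFun).exists_add_mem_mem_orthogonal (u - (w : H₂))
    have hnK : n ∈ (LinearMap.ker T₂.toFun).map T₂.domain.subtype := by
      have : n = (u - w) - r := by rw [hrn]; abel
      rw [this]
      exact Submodule.sub_mem _ huw (hrange hr)
    have hun : ⟪u, n⟫_ℂ = 0 := (Submodule.mem_orthogonal' _ _).1 hu n
      ⟨mem_ker_adjoint_of_orth T₁ hd₁ n hn, hnK⟩
    have hpn : ⟪p, n⟫_ℂ = 0 := (Submodule.mem_orthogonal _ _).1 hn p hp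
    have hqn : ⟪q, n⟫_ℂ = 0 := by
      rw [hpq, inner_add_left, hpn, zero_add] at hun
      exact hun
    have hqr : ⟪q, r⟫_ℂ = 0 := (Submodule.mem_orthogonal' _ _).1 hq r hr
    have hqw : ⟪q, (w : H₂)⟫_ℂ = ((‖q‖ ^ 2 : ℝ) : ℂ) := by
      have : (w : H₂) = p + q - (r + n) := by rw [← hrn, ← hpq]; abel
      rw [this, inner_sub_right, inner_add_right, inner_add_right, hqr, hqn, horth,
        inner_self_eq_norm_sq_to_K]
      push_cast
      simp
    apply le_of_sq_le_mul' (norm_nonneg _) (norm_nonneg _)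
    have h3 : ‖q‖ ^ 2 = ‖⟪q, (w : H₂)⟫_ℂ‖ := by
      rw [hqw, Complex.norm_real, Real.norm_of_nonneg (by positivity)]
    rw [h3]
    exact norm_inner_le_norm _ _
  have hn : ‖u‖ ^ 2 = ‖p‖ ^ 2 + ‖q‖ ^ 2 := by
    have h' : ⟪p, q⟫_ℂ = 0 := (Submodule.mem_orthogonal _ _).1 hq p hp
    have := norm_add_sq_eq_norm_sq_add_norm_sq_of_inner_eq_zero p q h'
    rw [hpq, sq, sq, sq]
    exact this
  generalize ‖T₁.adjoint ⟨u, hu₁⟩‖ = a at *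
  generalize ‖T₂ ⟨u, hu₂⟩‖ = b at *
  have h1 : ‖p‖ ^ 2 ≤ (C * a) ^ 2 := by gcongr
  have h2 : ‖q‖ ^ 2 ≤ (D * b) ^ 2 := by gcongr
  rw [one_div, inv_mul_le_iff₀ (by positivity), hn]
  nlinarith [sq_nonneg (C * b), sq_nonneg (D * a)]
end
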